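/- Let Σ_A(ℕ) be a topologically mixing, finitely primitive (BIP) countable Markov shift and f : Σ_A(ℕ) → ℝ satisfy the Walters condition with Var_1 f < ∞ and P(f) < ∞. The Mañé potential S_f satisfies: (1) S_f(x,y) ≤ V(y) − V(x) for any bounded calibrated sub-action V and all x, y ∈ Σ_A(ℕ); (2) S_f(x,x) ≤ 0 for every x ∈ Σ_A(ℕ); (3) S_f(x,y) + S_f(y,z) ≤ S_f(x,z) for all x, y, z ∈ Σ_A(ℕ). -/

import Mathlib

open Filter Topology MeasureTheory
open scoped ENNReal

/-- The countable Markov shift over alphabet ℕ determined by the 0-1 matrix `A`. -/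
def MarkovShift (A : ℕ → ℕ → Bool) : Type :=
  {x : ℕ → ℕ // ∀ i, A (x i) (x (i + 1)) = true}

namespace MarkovShift

variable {A : ℕ → ℕ → Bool}

instance : TopologicalSpace (MarkovShift A) :=
  instTopologicalSpaceSubtype

instance : MeasurableSpace (MarkovShift A) := borel _

instance : BorelSpace (MarkovShift A) := ⟨rfl⟩

/-- The shift map. -/
def shift (x : MarkovShift A) : MarkovShift A :=
  ⟨fun n => x.1 (n + 1), fun i => x.2 (i + 1)⟩

/-- The cylinder set determined by a finite word. -/
def cylinder (w : List ℕ) : Set (MarkovShift A) :=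
  {x | ∀ i : Fin w.length, x.1 i = w.get i}

/-- The cylinder set determined by the first `m` coordinates of `x`. -/
def cylOf (x : MarkovShift A) (m : ℕ) : Set (MarkovShift A) :=
  {y | ∀ i < m, y.1 i = x.1 i}

/-- A symbol is admissible when its cylinder is nonempty. -/
def Admissible (A : ℕ → ℕ → Bool) (a : ℕ) : Prop :=
  ∃ x : MarkovShift A, x.1 0 = a

/-- Topologically mixing. -/
def TopologicallyMixing (A : ℕ → ℕ → Bool) : Prop :=
  ∀ a b : ℕ, Admissible A a → Admissible A b →
    ∃ N : ℕ, ∀ n ≥ N, ∃ x : MarkovShift A, x.1 0 = a ∧ (shift^[n] x).1 0 = b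

/-- Finitely primitive (BIP). -/
def FinitelyPrimitive (A : ℕ → ℕ → Bool) : Prop :=
  ∃ (K₀ : ℕ) (F : Finset ℕ), ∀ a b : ℕ, Admissible A a → Admissible A b →
    ∃ w : List ℕ, w.length = K₀ ∧ (∀ c ∈ w, c ∈ F) ∧
      List.Chain' (fun u v => A u v = true) (a :: (w ++ [b]))

/-- First coordinate where two distinct points disagree. -/
noncomputable def firstDiff (x y : MarkovShift A) (h : x ≠ y) : ℕ :=
  Nat.find (Function.ne_iff.mp (fun hxy : x.1 = y.1 => h (Subtype.ext hxy)))

open Classical in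
/-- The metric `d(x,y) = r^{t(x,y)}`. -/
noncomputable def dist' (r : ℝ) (x y : MarkovShift A) : ℝ :=
  if h : x = y then 0 else r ^ firstDiff x y h

/-- Birkhoff sum `S_n f`. -/
def birkhoff (f : MarkovShift A → ℝ) (n : ℕ) (x : MarkovShift A) : ℝ :=
  ∑ j ∈ Finset.range n, f (shift^[j] x)

/-- The set of values `|S_n f x - S_n f y|` over pairs agreeing on the first `m` coordinates. -/
def varSet (f : MarkovShift A → ℝ) (n m : ℕ) : Set ℝ :=
  {c | ∃ x y : MarkovShift A, (∀ i < m, x.1 i = y.1 i) ∧ c = |birkhoff f n x - birkhoff f n y|}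

/-- `Var_m (S_n f)`. -/
noncomputable def varBirk (f : MarkovShift A → ℝ) (n m : ℕ) : ℝ := sSup (varSet f n m)

/-- `Var_1 f < ∞`. -/
def Var1Finite (f : MarkovShift A → ℝ) : Prop := BddAbove (varSet f 1 1)

/-- The set whose supremum is `sup_{n ≥ 1} Var_{n+k}(S_n f)`. -/
def waltersSet (f : MarkovShift A → ℝ) (k : ℕ) : Set ℝ :=
  {c | ∃ n, 1 ≤ n ∧ c ∈ varSet f n (n + k)}

/-- `M_k = sup_{n ≥ 1} Var_{n+k}(S_n f)`. -/
noncomputable def waltersSup (f : MarkovShift A → ℝ) (k : ℕ) : ℝ := sSup (waltersSet f k)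

/-- The Walters condition. -/
def SatisfiesWalters (f : MarkovShift A → ℝ) : Prop :=
  (∀ k, 1 ≤ k → BddAbove (waltersSet f k)) ∧
    Tendsto (fun k => waltersSup f k) atTop (𝓝 0)

/-- The partition function `Z_n(f,a) = Σ_{σ^n x = x, x₀ = a} e^{S_n f (x)}`. -/
noncomputable def partitionSum (f : MarkovShift A → ℝ) (n : ℕ) (a : ℕ) : ℝ :=
  ∑' x : {x : MarkovShift A // shift^[n] x = x ∧ x.1 0 = a}, Real.exp (birkhoff f n x.1)

/-- `f` has (finite) Gurevich pressure `p`. -/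
def HasGurevichPressure (f : MarkovShift A → ℝ) (p : ℝ) : Prop :=
  ∀ a : ℕ, Admissible A a →
    (∀ n, 1 ≤ n → Summable fun x : {x : MarkovShift A // shift^[n] x = x ∧ x.1 0 = a} =>
        Real.exp (birkhoff f n x.1)) ∧
    Tendsto (fun n : ℕ => (1 / (n : ℝ)) * Real.log (partitionSum f n a)) atTop (𝓝 p)

/-- σ-invariant Borel probability measure. -/
def IsInvariantProb (μ : Measure (MarkovShift A)) : Prop :=
  IsProbabilityMeasure μ ∧ μ.map shift = μ

/-- `m(f)`, the maximal ergodic average. -/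
noncomputable def mf (f : MarkovShift A → ℝ) : ℝ :=
  sSup {c | ∃ μ : Measure (MarkovShift A),
    IsInvariantProb μ ∧ Integrable f μ ∧ ∫ x, f x ∂μ = c}

/-- A maximizing measure for `f`. -/
def IsMaximizing (f : MarkovShift A → ℝ) (μ : Measure (MarkovShift A)) : Prop :=
  IsInvariantProb μ ∧ Integrable f μ ∧ ∫ x, f x ∂μ = mf f

/-- Bounded real valued function. -/
def BoundedFun (g : MarkovShift A → ℝ) : Prop := ∃ C, ∀ x, |g x| ≤ C

/-- A bounded calibrated sub-action for `f`. -/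
def IsCalibratedSubaction (f V : MarkovShift A → ℝ) : Prop :=
  Continuous V ∧ BoundedFun V ∧
    (∀ x, f x + V x - V (shift x) - mf f ≤ 0) ∧
    (∀ y, ∃ x, shift x = y ∧ f x + V x - V (shift x) - mf f = 0)

/-- The Ruelle transfer operator `(L_g u)(x) = Σ_{σ y = x} e^{g(y)} u(y)`. -/
noncomputable def ruelle (g u : MarkovShift A → ℝ) (x : MarkovShift A) : ℝ :=
  ∑' y : {y : MarkovShift A // shift y = x}, Real.exp (g y.1) * u y.1

/-- Ruelle-Perron-Frobenius data for the potential `f` with pressure `p`: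
eigenfunction `h`, eigenmeasure `ν`. -/
def IsRPF (f : MarkovShift A → ℝ) (p : ℝ) (h : MarkovShift A → ℝ)
    (ν : Measure (MarkovShift A)) : Prop :=
  Continuous h ∧ (∀ x, 0 < h x) ∧
    (∀ x, ruelle f h x = Real.exp p * h x) ∧
    IsProbabilityMeasure ν ∧
    (∀ g : MarkovShift A → ℝ, Continuous g → BoundedFun g →
      ∫ x, ruelle f g x ∂ν = Real.exp p * ∫ x, g x ∂ν) ∧
    ∫ x, h x ∂ν = 1

/-- The Gibbs measure `dμ = h dν`. -/
noncomputable def gibbs (h : MarkovShift A → ℝ) (ν : Measure (MarkovShift A)) :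
    Measure (MarkovShift A) :=
  ν.withDensity fun x => ENNReal.ofReal (h x)

/-- The Mañé potential `S_f(x,y)` (with respect to the metric of parameter `r`). -/
noncomputable def manePot (r : ℝ) (f : MarkovShift A → ℝ) (x y : MarkovShift A) : EReal :=
  ⨅ ε : {ε : ℝ // 0 < ε}, ⨆ n : {n : ℕ // 1 ≤ n},
    ⨆ _z : {z : MarkovShift A // dist' r x z < ε.1 ∧ shift^[n.1] z = y},
      ((birkhoff (fun w => f w - mf f) n.1 _z.1 : ℝ) : EReal)

/-- The (topological) support of a measure. -/
def msupport (μ : Measure (MarkovShift A)) : Set (MarkovShift A) :=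
  {x | ∀ U : Set (MarkovShift A), IsOpen U → x ∈ U → 0 < μ U}

end MarkovShift

namespace MarkovShift

/-!
`S_f(x, y)` is governed by the orbit segments which start in a small cylinder around `x` and end
exactly at `y`.

* Along such a segment, a sub-action `V` bounds the Birkhoff sum of `f - m(f)` by the increment of
  `V`, whose initial value is close to `V x`.
* A segment from near `x` to `x` is shadowed by a periodic orbit. The average of `f` over that orbit
  is the integral of an invariant measure, hence at most `m(f)`, and the Walters condition transfers
  this to the segment up to an arbitrarily small error.
* A segment from near `x` to `y` and one from near `y` to `z` can be concatenated, and the Walters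
  condition again makes the error arbitrarily small.

The comparison with `m(f)` requires the integrals of `f` to be bounded above. Every symbol lies on a
loop of fixed length through a fixed symbol `a` whose remaining symbols come from a finite set, so
finiteness of `Z_n(f, a)` for a single `n` bounds `f` from above.
-/

section Coordinates

variable {A : ℕ → ℕ → Bool} {x y : MarkovShift A} {k : ℕ}

@[ext]
theorem ext (h : ∀ i, x.1 i = y.1 i) : x = y :=
  Subtype.ext (funext h)

theorem shift_iterate_apply (x : MarkovShift A) (n i : ℕ) : (shift^[n] x).1 i = x.1 (n + i) := by
  induction n generalizing x with
  | zero => rw [Function.iterate_zero_apply, zero_add]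
  | succ n ih => rw [Function.iterate_succ_apply, ih, add_right_comm]; rfl

theorem continuous_shift : Continuous (shift : MarkovShift A → MarkovShift A) :=
  continuous_induced_rng.2 <|
    continuous_pi fun i => (continuous_apply (i + 1)).comp continuous_subtype_val

instance : T1Space (MarkovShift A) :=
  inferInstanceAs (T1Space {x : ℕ → ℕ // ∀ i, A (x i) (x (i + 1)) = true})

theorem mem_cylOf_comm : y ∈ cylOf x k ↔ x ∈ cylOf y k :=
  forall₂_congr fun _ _ => eq_comm

theorem mem_cylOf_succ_iff :
    y ∈ cylOf x (k + 1) ↔ y.1 0 = x.1 0 ∧ shift y ∈ cylOf (shift x) k :=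
  Nat.forall_lt_succ_left

theorem exists_cylOf_subset_of_mem_nhds {s : Set (MarkovShift A)} (hs : s ∈ 𝓝 x) :
    ∃ k, cylOf x k ⊆ s := by
  obtain ⟨u, hu, hus⟩ := (mem_nhds_induced _ x s).1 hs
  obtain ⟨_, ⟨x', k, rfl⟩, hx, hsub⟩ := (PiNat.isTopologicalBasis_cylinders _).mem_nhds_iff.1 hu
  rw [← PiNat.mem_cylinder_iff_eq.1 hx] at hsub
  exact ⟨k, fun y hy => hus (hsub hy)⟩

theorem dist'_le_pow_iff {r : ℝ} (hr0 : 0 < r) (hr1 : r < 1) :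
    dist' r x y ≤ r ^ k ↔ y ∈ cylOf x k := by
  by_cases hxy : x = y
  · simp [dist', cylOf, hxy, pow_nonneg hr0.le]
  · rw [dist', dif_neg hxy, pow_le_pow_iff_right_of_lt_one₀ hr0 hr1, firstDiff, Nat.le_find_iff]
    simp only [not_not, eq_comm, cylOf, Set.mem_ofPred_eq]

end Coordinates

section Concatenation

variable {A : ℕ → ℕ → Bool} {x y : MarkovShift A} {n k : ℕ}

/-- The point `a x₀ x₁ x₂ …`, i.e. the preimage of `x` under the shift starting with `a`. -/
def cons (a : ℕ) (x : MarkovShift A) (h : A a (x.1 0) = true) : MarkovShift A :=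
  ⟨fun | 0 => a | i + 1 => x.1 i, fun | 0 => h | i + 1 => x.2 i⟩

theorem exists_mem_cylOf_shift_iterate_eq (hk : 0 < k) (h : y ∈ cylOf (shift^[n] x) k) :
    ∃ w ∈ cylOf x (n + k), shift^[n] w = y := by
  induction n generalizing x with
  | zero => exact ⟨y, by rwa [zero_add], rfl⟩
  | succ n ih =>
    obtain ⟨w, hw, hwy⟩ := ih h
    have hstep : A (x.1 0) (w.1 0) = true := by
      rw [hw 0 (by omega)]
      exact x.2 0
    refine ⟨cons (x.1 0) w hstep, ?_, hwy⟩
    rw [add_right_comm, mem_cylOf_succ_iff]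
    exact ⟨rfl, hw⟩

theorem exists_isPeriodicPt_mem_cylOf (hn : 0 < n) (hk : 0 < k) (h : shift^[n] x ∈ cylOf x k) :
    ∃ w ∈ cylOf x (n + k), Function.IsPeriodicPt shift n w := by
  have hmod : ∀ i < n + k, x.1 (i % n) = x.1 i := by
    intro i
    induction i using Nat.strong_induction_on with
    | _ i ih =>
      intro hi
      rcases lt_or_ge i n with hin | hni
      · rw [Nat.mod_eq_of_lt hin]
      · obtain ⟨j, rfl⟩ := Nat.exists_eq_add_of_le hni
        rw [Nat.add_mod_left, ih j (by omega) (by omega), ← shift_iterate_apply,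
          h j (by omega)]
  have hadm : ∀ i, A (x.1 (i % n)) (x.1 ((i + 1) % n)) = true := by
    intro i
    have hlt : i % n < n := Nat.mod_lt i hn
    rw [← Nat.mod_add_mod, hmod (i % n + 1) (by omega)]
    exact x.2 (i % n)
  obtain ⟨w, hw⟩ : ∃ w : MarkovShift A, ∀ i, w.1 i = x.1 (i % n) := ⟨⟨_, hadm⟩, fun _ => rfl⟩
  refine ⟨w, fun i hi => (hw i).trans (hmod i hi), ext fun i => ?_⟩
  rw [shift_iterate_apply, hw, hw, Nat.add_mod_left]

theorem exists_shift_iterate_eq_of_isChain {a b : ℕ} {l : List ℕ}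
    (hl : List.IsChain (fun u v => A u v = true) (a :: (l ++ [b]))) (hy : y.1 0 = b) :
    ∃ x : MarkovShift A, x.1 0 = a ∧ shift^[l.length + 1] x = y ∧
      ∀ i < l.length, x.1 (i + 1) ∈ l := by
  induction l generalizing a with
  | nil =>
    have hab : A a (y.1 0) = true := by simpa [hy] using hl
    exact ⟨cons a y hab, rfl, rfl, fun i hi => absurd hi i.not_lt_zero⟩
  | cons c l ih =>
    rw [List.cons_append, List.isChain_cons_cons] at hl
    obtain ⟨x, hxc, hxy, hxl⟩ := ih hl.2
    refine ⟨cons a x (hxc ▸ hl.1), rfl, hxy, fun i hi => ?_⟩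
    cases i with
    | zero => exact List.mem_cons.2 (Or.inl hxc)
    | succ i => exact List.mem_cons_of_mem c (hxl i (Nat.lt_of_succ_lt_succ hi))

theorem FinitelyPrimitive.exists_loop (hbip : FinitelyPrimitive A) :
    ∃ (n m : ℕ) (F : Finset ℕ), m < n ∧ ∀ a b, Admissible A a → Admissible A b →
      ∃ w : MarkovShift A, Function.IsPeriodicPt shift n w ∧ w.1 0 = a ∧ w.1 m = b ∧
        ∀ i < n, i ≠ m → w.1 i ∈ insert a F := by
  obtain ⟨K, F, hconnect⟩ := hbip
  refine ⟨(K + 1) + (K + 1), K + 1, F, by omega, fun a b ha hb => ?_⟩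
  obtain ⟨s, hsa⟩ := ha
  obtain ⟨l, hlK, hlF, hl⟩ := hconnect b a hb ⟨s, hsa⟩
  obtain ⟨t, htb, hts, htF⟩ := exists_shift_iterate_eq_of_isChain hl hsa
  obtain ⟨l', hlK', hlF', hl'⟩ := hconnect a b ⟨s, hsa⟩ hb
  obtain ⟨u, hua, hut, huF⟩ := exists_shift_iterate_eq_of_isChain hl' htb
  rw [hlK] at hts htF
  rw [hlK'] at hut huF
  have hclose : shift^[(K + 1) + (K + 1)] u ∈ cylOf u 1 := by
    rw [Function.iterate_add_apply, hut, hts]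
    intro i hi
    rw [Nat.lt_one_iff.1 hi, hsa, hua]
  obtain ⟨w, hwu, hper⟩ := exists_isPeriodicPt_mem_cylOf (by omega) one_pos hclose
  have hut_apply (i : ℕ) : u.1 (K + 1 + i) = t.1 i := by rw [← shift_iterate_apply, hut]
  refine ⟨w, hper, (hwu 0 (by omega)).trans hua, ?_, fun i hi him => ?_⟩
  · rw [hwu (K + 1) (by omega), ← htb, ← hut_apply, add_zero]
  · rw [hwu i (by omega), Finset.mem_insert]
    rcases Nat.eq_zero_or_pos i with rfl | hpos
    · exact Or.inl hua
    rcases lt_or_gt_of_ne him with hlt | hgt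
    · obtain ⟨j, rfl⟩ := Nat.exists_eq_add_of_le' hpos
      exact Or.inr (hlF' _ (huF j (by omega)))
    · obtain ⟨j, rfl⟩ := Nat.exists_eq_add_of_lt hgt
      rw [add_assoc, hut_apply]
      exact Or.inr (hlF _ (htF j (by omega)))

end Concatenation

section BirkhoffSums

variable {A : ℕ → ℕ → Bool} {f : MarkovShift A → ℝ}

theorem birkhoff_eq_birkhoffSum (f : MarkovShift A → ℝ) : birkhoff f = birkhoffSum shift f :=
  rfl

theorem birkhoff_sub_const (f : MarkovShift A → ℝ) (c : ℝ) (n : ℕ) (x : MarkovShift A) :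
    birkhoff (fun w => f w - c) n x = birkhoff f n x - n * c := by
  simp only [birkhoff, Finset.sum_sub_distrib, Finset.sum_const, Finset.card_range, nsmul_eq_mul]

theorem SatisfiesWalters.eventually_abs_birkhoff_sub_lt (hW : SatisfiesWalters f) {δ : ℝ}
    (hδ : 0 < δ) :
    ∀ᶠ k in atTop, ∀ n, 1 ≤ n → ∀ x, ∀ y ∈ cylOf x (n + k),
      |birkhoff f n x - birkhoff f n y| < δ := by
  filter_upwards [hW.2.eventually (gt_mem_nhds hδ), eventually_ge_atTop 1] with k hsup hk
  exact fun n hn x y hy => (le_csSup (hW.1 k hk)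
    ⟨n, hn, x, y, mem_cylOf_comm.1 hy, rfl⟩).trans_lt hsup

theorem Var1Finite.exists_abs_sub_le (hf : Var1Finite f) :
    ∃ M, ∀ x y : MarkovShift A, x.1 0 = y.1 0 → |f x - f y| ≤ M := by
  obtain ⟨M, hM⟩ := hf
  refine ⟨M, fun x y hxy => hM ⟨x, y, fun i hi => ?_, ?_⟩⟩
  · rwa [Nat.lt_one_iff.1 hi]
  · rw [birkhoff_eq_birkhoffSum, birkhoffSum_one, birkhoffSum_one]

theorem Var1Finite.exists_le_of_apply_zero_mem (hf : Var1Finite f) (F : Finset ℕ) :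
    ∃ D, ∀ x : MarkovShift A, x.1 0 ∈ F → D ≤ f x := by
  obtain ⟨M, hM⟩ := hf.exists_abs_sub_le
  have hcyl (c : ℕ) : BddBelow (f '' {x | x.1 0 = c}) := by
    rcases Set.eq_empty_or_nonempty {x : MarkovShift A | x.1 0 = c} with hempty | ⟨q, hq⟩
    · rw [hempty, Set.image_empty]
      exact bddBelow_empty
    · refine ⟨f q - M, Set.forall_mem_image.2 fun x hx => ?_⟩
      linarith [(abs_le.1 (hM q x (hq.trans hx.symm))).2]
  obtain ⟨D, hD⟩ := (F.finite_toSet.bddBelow_biUnion).2 fun c _ => hcyl c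
  exact ⟨D, fun x hx => hD (Set.mem_biUnion hx ⟨x, rfl, rfl⟩)⟩

theorem birkhoff_le_partitionSum {n a : ℕ}
    (hsum : Summable fun x : {x : MarkovShift A // shift^[n] x = x ∧ x.1 0 = a} =>
      Real.exp (birkhoff f n x.1))
    {w : MarkovShift A} (hw : Function.IsPeriodicPt shift n w) (hwa : w.1 0 = a) :
    birkhoff f n w ≤ partitionSum f n a :=
  calc
    birkhoff f n w ≤ Real.exp (birkhoff f n w) := by
      linarith [Real.add_one_le_exp (birkhoff f n w)]
    _ ≤ partitionSum f n a := hsum.le_tsum ⟨w, hw, hwa⟩ fun _ _ => (Real.exp_pos _).le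

theorem bddAbove_range_of_hasGurevichPressure (hbip : FinitelyPrimitive A) (hf : Var1Finite f)
    {p : ℝ} (hP : HasGurevichPressure f p) : BddAbove (Set.range f) := by
  rcases isEmpty_or_nonempty (MarkovShift A) with _ | ⟨⟨x₀⟩⟩
  · rw [Set.range_eq_empty]
    exact bddAbove_empty
  obtain ⟨n, m, F, hmn, hloop⟩ := hbip.exists_loop
  obtain ⟨M, hM⟩ := hf.exists_abs_sub_le
  obtain ⟨D, hD⟩ := hf.exists_le_of_apply_zero_mem (insert (x₀.1 0) F)
  have hsum := (hP (x₀.1 0) ⟨x₀, rfl⟩).1 n (by omega)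
  refine ⟨partitionSum f n (x₀.1 0) - ((Finset.range n).erase m).card • D + M,
    Set.forall_mem_range.2 fun x => ?_⟩
  obtain ⟨w, hper, hw0, hwm, hwF⟩ := hloop (x₀.1 0) (x.1 0) ⟨x₀, rfl⟩ ⟨x, rfl⟩
  have hrest : ((Finset.range n).erase m).card • D ≤
      ∑ j ∈ (Finset.range n).erase m, f (shift^[j] w) := by
    refine Finset.card_nsmul_le_sum _ _ _ fun j hj => hD _ ?_
    obtain ⟨hjm, hjn⟩ := Finset.mem_erase.1 hj
    rw [shift_iterate_apply, add_zero]
    exact hwF j (Finset.mem_range.1 hjn) hjm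
  have hsplit : f (shift^[m] w) + ∑ j ∈ (Finset.range n).erase m, f (shift^[j] w) =
      birkhoff f n w :=
    Finset.add_sum_erase _ (fun j => f (shift^[j] w)) (Finset.mem_range.2 hmn)
  have hclose : |f x - f (shift^[m] w)| ≤ M := hM _ _ (by rw [shift_iterate_apply, add_zero, hwm])
  linarith [birkhoff_le_partitionSum hsum hper hw0, (abs_le.1 hclose).2]

end BirkhoffSums

section OrbitMeasure

variable {α : Type*} [MeasurableSpace α] {T : α → α} {n : ℕ} {w : α}

/-- The empirical measure `n⁻¹ ∑_{j < n} δ_{T^j w}` of the first `n` points of the orbit of `w`. It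
is `T`-invariant when `w` has period `n`. -/
noncomputable def orbitMeasure (T : α → α) (n : ℕ) (w : α) : Measure α :=
  (n : ℝ≥0∞)⁻¹ • ∑ j ∈ Finset.range n, Measure.dirac (T^[j] w)

theorem isProbabilityMeasure_orbitMeasure (hn : n ≠ 0) :
    IsProbabilityMeasure (orbitMeasure T n w) := by
  constructor
  simp only [orbitMeasure, Measure.smul_apply, Measure.finsetSum_apply, measure_univ,
    Finset.sum_const, Finset.card_range, nsmul_eq_mul, mul_one, smul_eq_mul]
  exact ENNReal.inv_mul_cancel (Nat.cast_ne_zero.2 hn) (ENNReal.natCast_ne_top n)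

theorem sum_range_comp_succ_of_eq {M : Type*} [AddCommMonoid M] {g : ℕ → M}
    (h : g n = g 0) : ∑ j ∈ Finset.range n, g (j + 1) = ∑ j ∈ Finset.range n, g j := by
  cases n with
  | zero => rfl
  | succ m => rw [Finset.sum_range_succ, Finset.sum_range_succ', h]

theorem map_orbitMeasure (hT : Measurable T) (hw : Function.IsPeriodicPt T n w) :
    (orbitMeasure T n w).map T = orbitMeasure T n w := by
  rw [orbitMeasure, Measure.map_smul, Measure.map_finset_sum hT.aemeasurable]
  simp only [Measure.map_dirac' hT, ← Function.iterate_succ_apply']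
  rw [sum_range_comp_succ_of_eq (g := fun j => Measure.dirac (T^[j] w))
    (congrArg Measure.dirac hw)]

theorem integrable_orbitMeasure [MeasurableSingletonClass α] {E : Type*} [NormedAddCommGroup E]
    (g : α → E) (hn : n ≠ 0) : Integrable g (orbitMeasure T n w) :=
  (integrable_finsetSum_measure.2 fun _ _ => integrable_dirac enorm_lt_top).smul_measure
    (ENNReal.inv_ne_top.2 (Nat.cast_ne_zero.2 hn))

theorem integral_orbitMeasure [MeasurableSingletonClass α] {E : Type*} [NormedAddCommGroup E]
    [NormedSpace ℝ E] [CompleteSpace E] (g : α → E) :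
    ∫ x, g x ∂orbitMeasure T n w = birkhoffAverage ℝ T g n w := by
  rw [orbitMeasure, integral_smul_measure,
    integral_finsetSum_measure fun _ _ => integrable_dirac enorm_lt_top]
  simp only [integral_dirac, ENNReal.toReal_inv, ENNReal.toReal_natCast, birkhoffAverage,
    birkhoffSum]

end OrbitMeasure

section InvariantIntegrals

variable {A : ℕ → ℕ → Bool} {f : MarkovShift A → ℝ}

/-- The set of integrals of `f` against invariant probability measures, whose supremum is `m(f)`.
If it is unbounded above, then `mf f` is the junk value `0`. -/
def invariantIntegrals (f : MarkovShift A → ℝ) : Set ℝ :=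
  {c | ∃ μ : Measure (MarkovShift A), IsInvariantProb μ ∧ Integrable f μ ∧ ∫ x, f x ∂μ = c}

theorem bddAbove_invariantIntegrals (hf : BddAbove (Set.range f)) :
    BddAbove (invariantIntegrals f) := by
  obtain ⟨C, hC⟩ := hf
  refine ⟨C, ?_⟩
  rintro _ ⟨μ, ⟨_, -⟩, hint, rfl⟩
  calc
    ∫ x, f x ∂μ ≤ ∫ _, C ∂μ := integral_mono hint (integrable_const C) fun x => hC ⟨x, rfl⟩
    _ = C := by rw [integral_const, probReal_univ, one_smul]

theorem birkhoff_le_mul_mf (hf : BddAbove (invariantIntegrals f)) {n : ℕ} {w : MarkovShift A}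
    (hw : Function.IsPeriodicPt shift n w) : birkhoff f n w ≤ n * mf f := by
  rcases Nat.eq_zero_or_pos n with rfl | hn
  · simp [birkhoff]
  have hmem : birkhoffAverage ℝ shift f n w ∈ invariantIntegrals f :=
    ⟨orbitMeasure shift n w,
      ⟨isProbabilityMeasure_orbitMeasure hn.ne', map_orbitMeasure continuous_shift.measurable hw⟩,
      integrable_orbitMeasure f hn.ne', integral_orbitMeasure f⟩
  exact (inv_mul_le_iff₀ (Nat.cast_pos.2 hn)).1 (le_csSup hf hmem)

end InvariantIntegrals

section ConnectingSums

variable {A : ℕ → ℕ → Bool} {f : MarkovShift A → ℝ} {x y : MarkovShift A} {r : ℝ}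

/-- The Birkhoff sums of `f - m(f)` along the nonempty orbit segments from the `k`-cylinder of `x`
to `y`. The Mañé potential is the limit of their suprema as `k → ∞`. -/
def connectingSums (f : MarkovShift A → ℝ) (x y : MarkovShift A) (k : ℕ) : Set ℝ :=
  {c | ∃ n, 1 ≤ n ∧ ∃ z ∈ cylOf x k, shift^[n] z = y ∧ birkhoff (fun w => f w - mf f) n z = c}

theorem manePot_eq_iInf_iSup_connectingSums (hr0 : 0 < r) (hr1 : r < 1)
    (f : MarkovShift A → ℝ) (x y : MarkovShift A) :
    manePot r f x y = ⨅ k, ⨆ c ∈ connectingSums f x y k, (c : EReal) := by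
  apply le_antisymm
  · refine le_iInf fun k => (iInf_le _ ⟨r ^ k, pow_pos hr0 k⟩).trans (iSup₂_le fun n z => ?_)
    exact le_iSup₂_of_le _
      ⟨n.1, n.2, z.1, (dist'_le_pow_iff hr0 hr1).1 z.2.1.le, z.2.2, rfl⟩ le_rfl
  · refine le_iInf fun ε => ?_
    obtain ⟨k, hk⟩ := exists_pow_lt_of_lt_one ε.2 hr1
    refine (iInf_le _ k).trans (iSup₂_le ?_)
    rintro _ ⟨n, hn, z, hz, hzy, rfl⟩
    have hdist : dist' r x z < ε.1 := ((dist'_le_pow_iff hr0 hr1).2 hz).trans_lt hk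
    exact le_iSup₂_of_le ⟨n, hn⟩ ⟨z, hdist, hzy⟩ le_rfl

theorem manePot_le_of_forall_gt (hr0 : 0 < r) (hr1 : r < 1) {b : ℝ}
    (h : ∀ b' > b, ∃ k, ∀ c ∈ connectingSums f x y k, c ≤ b') : manePot r f x y ≤ b := by
  rw [manePot_eq_iInf_iSup_connectingSums hr0 hr1]
  refine EReal.le_of_forall_lt_iff_le.1 fun b' hb' => ?_
  obtain ⟨k, hk⟩ := h b' (EReal.coe_lt_coe_iff.1 hb')
  exact (iInf_le _ k).trans (iSup₂_le fun c hc => EReal.coe_le_coe_iff.2 (hk c hc))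

theorem le_manePot_of_forall_lt (hr0 : 0 < r) (hr1 : r < 1) {b : ℝ}
    (h : ∀ b' < b, ∀ k, ∃ c ∈ connectingSums f x y k, b' ≤ c) : b ≤ manePot r f x y := by
  rw [manePot_eq_iInf_iSup_connectingSums hr0 hr1]
  refine EReal.ge_of_forall_gt_iff_ge.1 fun b' hb' => le_iInf fun k => ?_
  obtain ⟨c, hc, hb'c⟩ := h b' (EReal.coe_lt_coe_iff.1 hb') k
  exact le_iSup₂_of_le c hc (EReal.coe_le_coe_iff.2 hb'c)

theorem exists_mem_connectingSums_of_lt_manePot (hr0 : 0 < r) (hr1 : r < 1) {b : ℝ}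
    (h : b < manePot r f x y) (k : ℕ) : ∃ c ∈ connectingSums f x y k, b < c := by
  rw [manePot_eq_iInf_iSup_connectingSums hr0 hr1] at h
  have hk := h.trans_le (iInf_le _ k)
  simp only [lt_iSup_iff] at hk
  obtain ⟨c, hc, hbc⟩ := hk
  exact ⟨c, hc, EReal.coe_lt_coe_iff.1 hbc⟩

end ConnectingSums

section ManePotential

variable {A : ℕ → ℕ → Bool} {f V : MarkovShift A → ℝ} {x : MarkovShift A} {r : ℝ}

/-- The defining inequality of a sub-action for `f`; continuity is required separately. -/
def IsSubaction (f V : MarkovShift A → ℝ) : Prop :=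
  ∀ x, f x + V x - V (shift x) - mf f ≤ 0

theorem IsSubaction.birkhoff_le (hV : IsSubaction f V) (n : ℕ) (x : MarkovShift A) :
    birkhoff (fun w => f w - mf f) n x ≤ V (shift^[n] x) - V x :=
  calc
    birkhoff (fun w => f w - mf f) n x
      ≤ ∑ j ∈ Finset.range n, (V (shift^[j + 1] x) - V (shift^[j] x)) := by
        refine Finset.sum_le_sum fun j _ => ?_
        rw [Function.iterate_succ_apply']
        linarith [hV (shift^[j] x)]
    _ = V (shift^[n] x) - V x := Finset.sum_range_sub (fun j => V (shift^[j] x)) n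

theorem IsSubaction.manePot_le (hr0 : 0 < r) (hr1 : r < 1) (hV : IsSubaction f V)
    (hcont : LowerSemicontinuousAt V x) (y : MarkovShift A) :
    manePot r f x y ≤ ((V y - V x : ℝ) : EReal) := by
  refine manePot_le_of_forall_gt hr0 hr1 fun b hb => ?_
  obtain ⟨k, hk⟩ := exists_cylOf_subset_of_mem_nhds (hcont (V y - b) (by linarith))
  refine ⟨k, ?_⟩
  rintro _ ⟨n, -, z, hz, rfl, rfl⟩
  have hVz : V (shift^[n] z) - b < V z := hk hz
  linarith [hV.birkhoff_le n z]

theorem manePot_self_nonpos (hr0 : 0 < r) (hr1 : r < 1) (hW : SatisfiesWalters f)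
    (hf : BddAbove (invariantIntegrals f)) (x : MarkovShift A) : manePot r f x x ≤ 0 := by
  refine manePot_le_of_forall_gt hr0 hr1 fun δ hδ => ?_
  obtain ⟨k, hvar, hk⟩ :=
    ((hW.eventually_abs_birkhoff_sub_lt hδ).and (eventually_gt_atTop 0)).exists
  refine ⟨k, ?_⟩
  rintro _ ⟨n, hn, z, hz, rfl, rfl⟩
  obtain ⟨w, hwz, hper⟩ := exists_isPeriodicPt_mem_cylOf hn hk (mem_cylOf_comm.1 hz)
  rw [birkhoff_sub_const]
  linarith [(abs_lt.1 (hvar n hn z w hwz)).2, birkhoff_le_mul_mf hf hper]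

theorem SatisfiesWalters.exists_connectingSums_add_le (hW : SatisfiesWalters f) {δ : ℝ}
    (hδ : 0 < δ) (k₀ : ℕ) (x y z : MarkovShift A) :
    ∃ k, ∀ a ∈ connectingSums f x y k, ∀ b ∈ connectingSums f y z k,
      ∃ c ∈ connectingSums f x z k₀, a + b - δ ≤ c := by
  obtain ⟨k, hvar, hk, hk₀⟩ := ((hW.eventually_abs_birkhoff_sub_lt hδ).and
    ((eventually_gt_atTop 0).and (eventually_ge_atTop k₀))).exists
  refine ⟨k, ?_⟩
  rintro _ ⟨n, hn, u, hu, rfl, rfl⟩ _ ⟨m, -, v, hv, rfl, rfl⟩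
  obtain ⟨w, hwu, rfl⟩ := exists_mem_cylOf_shift_iterate_eq hk hv
  have hwx : w ∈ cylOf x k₀ := fun i hi => (hwu i (by omega)).trans (hu i (by omega))
  refine ⟨_, ⟨n + m, by omega, w, hwx, ?_, rfl⟩, ?_⟩
  · rw [add_comm, Function.iterate_add_apply]
  · have hcat := birkhoffSum_add shift (fun w => f w - mf f) n m w
    rw [← birkhoff_eq_birkhoffSum, birkhoff_sub_const f _ n] at hcat
    rw [hcat, birkhoff_sub_const f _ n]
    linarith [(abs_lt.1 (hvar n hn u w hwu)).2]

theorem ereal_add_le_of_forall_coe_lt {a b c : EReal}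
    (h : ∀ s t : ℝ, s < a → t < b → ((s + t : ℝ) : EReal) ≤ c) : a + b ≤ c := by
  refine EReal.add_le_of_forall_lt fun a' ha b' hb => ?_
  obtain ⟨s, has, hsa⟩ := EReal.lt_iff_exists_real_btwn.1 ha
  obtain ⟨t, hbt, htb⟩ := EReal.lt_iff_exists_real_btwn.1 hb
  exact (add_le_add has.le hbt.le).trans (h s t hsa htb)

theorem manePot_add_manePot_le (hr0 : 0 < r) (hr1 : r < 1) (hW : SatisfiesWalters f)
    (x y z : MarkovShift A) : manePot r f x y + manePot r f y z ≤ manePot r f x z := by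
  refine ereal_add_le_of_forall_coe_lt fun s t hs ht => ?_
  refine le_manePot_of_forall_lt hr0 hr1 fun b hb k₀ => ?_
  obtain ⟨k, hk⟩ := hW.exists_connectingSums_add_le (sub_pos.2 hb) k₀ x y z
  obtain ⟨c₁, hc₁, hsc₁⟩ := exists_mem_connectingSums_of_lt_manePot hr0 hr1 hs k
  obtain ⟨c₂, hc₂, htc₂⟩ := exists_mem_connectingSums_of_lt_manePot hr0 hr1 ht k
  obtain ⟨c, hc, hle⟩ := hk c₁ hc₁ c₂ hc₂
  exact ⟨c, hc, by linarith⟩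

end ManePotential

theorem mane_potential_properties_general
    {A : ℕ → ℕ → Bool} {r : ℝ} (hr0 : 0 < r) (hr1 : r < 1) {f : MarkovShift A → ℝ}
    (hWalters : SatisfiesWalters f) (hbdd : BddAbove (invariantIntegrals f)) :
    (∀ V : MarkovShift A → ℝ, LowerSemicontinuous V → IsSubaction f V →
        ∀ x y : MarkovShift A, manePot r f x y ≤ ((V y - V x : ℝ) : EReal)) ∧
      (∀ x : MarkovShift A, manePot r f x x ≤ 0) ∧
      (∀ x y z : MarkovShift A,
        manePot r f x y + manePot r f y z ≤ manePot r f x z) :=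
  ⟨fun _ hcont hV x y => hV.manePot_le hr0 hr1 (hcont x) y,
    manePot_self_nonpos hr0 hr1 hWalters hbdd,
    manePot_add_manePot_le hr0 hr1 hWalters⟩

/-- Properties of the Mañé potential: comparison with calibrated sub-actions,
`S_f(x,x) ≤ 0`, and the triangle inequality. -/
theorem mane_potential_properties
    (A : ℕ → ℕ → Bool) (r : ℝ) (hr0 : 0 < r) (hr1 : r < 1)
    (hmix : TopologicallyMixing A)
    (hbip : FinitelyPrimitive A)
    (f : MarkovShift A → ℝ)
    (hWalters : SatisfiesWalters f)
    (hVar1 : Var1Finite f)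
    (p : ℝ)
    (hPfin : HasGurevichPressure f p) :
    (∀ V : MarkovShift A → ℝ, IsCalibratedSubaction f V →
        ∀ x y : MarkovShift A, manePot r f x y ≤ ((V y - V x : ℝ) : EReal)) ∧
      (∀ x : MarkovShift A, manePot r f x x ≤ 0) ∧
      (∀ x y z : MarkovShift A,
        manePot r f x y + manePot r f y z ≤ manePot r f x z) := by
  obtain ⟨hsub, hself, htri⟩ := mane_potential_properties_general hr0 hr1 hWalters
    (bddAbove_invariantIntegrals (bddAbove_range_of_hasGurevichPressure hbip hVar1 hPfin))
  exact ⟨fun V ⟨hcont, _, hV, _⟩ => hsub V hcont.lowerSemicontinuous hV, hself, htri⟩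

end MarkovShift
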